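/- Let Γ > 0, δ² > 0, M ≥ 1, and for 1 ≤ m ≤ M set V_m = V_max/(1+Γ)^{M-m} with V_max > 0. Then for every 2 ≤ m ≤ M, ∑_{x=1}^{m-1} V_x = V_1·((1+Γ)^{m-1} − 1)/Γ where V_1 = V_max/(1+Γ)^{M-1}, and the SIC feasibility condition V_m ≥ Γ(∑_{x=1}^{m-1} V_x + δ²) holds if and only if V_1 ≥ Γδ², i.e., if and only if V_max ≥ δ²Γ(1+Γ)^{M-1}. -/

import Mathlib

/-! Consecutive levels have ratio `1 + Γ`, so `V (i + 1) - V i = Γ * V i` and the interference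
`Γ * ∑ V x` seen at level `m` telescopes to `V m - V 1`. Subtracting it from both sides of the
feasibility condition at level `m` leaves the condition at the lowest level. -/

/-- The terms `u m, …, u n` form a geometric progression of ratio `r`. The values of `u` at other
indices are unconstrained, as power levels are only prescribed for `1 ≤ m ≤ M`. -/
def IsGeometricOn {R : Type*} [Mul R] (u : ℕ → R) (r : R) (m n : ℕ) : Prop :=
  ∀ i ∈ Finset.Ico m n, u (i + 1) = r * u i

namespace IsGeometricOn

variable {R : Type*} {u : ℕ → R} {m n : ℕ}

theorem mono_right [Mul R] {r : R} {k : ℕ} (hu : IsGeometricOn u r m n) (hkn : k ≤ n) :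
    IsGeometricOn u r m k :=
  fun i hi => hu i (Finset.Ico_subset_Ico_right hkn hi)

theorem eq_pow_mul [Monoid R] {r : R} (hu : IsGeometricOn u r m n) (hmn : m ≤ n) :
    u n = r ^ (n - m) * u m := by
  induction n, hmn using Nat.le_induction with
  | base => simp
  | succ k hmk ih =>
    rw [hu k (Finset.mem_Ico.mpr ⟨hmk, k.lt_succ_self⟩), ih (hu.mono_right k.le_succ),
      Nat.sub_add_comm hmk, pow_succ', mul_assoc]

theorem mul_sum_Ico [Ring R] {d : R} (hu : IsGeometricOn u (1 + d) m n) (hmn : m ≤ n) :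
    d * ∑ i ∈ Finset.Ico m n, u i = u n - u m := by
  calc d * ∑ i ∈ Finset.Ico m n, u i
      = ∑ i ∈ Finset.Ico m n, (u (i + 1) - u i) := by
        rw [Finset.mul_sum]
        refine Finset.sum_congr rfl fun i hi => ?_
        rw [hu i hi, one_add_mul, add_sub_cancel_left]
    _ = u n - u m := Finset.sum_Ico_sub u hmn

theorem sum_Ico_eq_div [Field R] {d : R} (hu : IsGeometricOn u (1 + d) m n) (hmn : m ≤ n)
    (hd : d ≠ 0) :
    ∑ i ∈ Finset.Ico m n, u i = u m * ((1 + d) ^ (n - m) - 1) / d := by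
  rw [eq_div_iff hd, mul_comm, hu.mul_sum_Ico hmn, hu.eq_pow_mul hmn, mul_sub_one,
    mul_comm (u m)]

theorem mul_sum_Ico_add_le_iff [Ring R] [PartialOrder R] [IsOrderedAddMonoid R] {d : R}
    (hu : IsGeometricOn u (1 + d) m n) (hmn : m ≤ n) (c : R) :
    d * (∑ i ∈ Finset.Ico m n, u i + c) ≤ u n ↔ d * c ≤ u m := by
  rw [mul_add, hu.mul_sum_Ico hmn, ← le_sub_iff_add_le', sub_sub_cancel]

end IsGeometricOn

theorem isGeometricOn_of_eq_div_pow_sub {G₀ : Type*} [CommGroupWithZero G₀] {u : ℕ → G₀}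
    {a r : G₀} {m n : ℕ} (hr : r ≠ 0) (hu : ∀ i, m ≤ i → i ≤ n → u i = a / r ^ (n - i)) :
    IsGeometricOn u r m n := by
  intro i hi
  obtain ⟨hmi, hin⟩ := Finset.mem_Ico.mp hi
  have hexp : n - i = (n - (i + 1)) + 1 := by omega
  rw [hu (i + 1) (hmi.trans i.le_succ) hin, hu i hmi hin.le, hexp, pow_succ', mul_div_assoc',
    mul_div_mul_left _ _ hr]

theorem stmt_12_general {K : Type*} [Field K] [LinearOrder K] [IsStrictOrderedRing K]
    {Γ : K} (hΓ₀ : Γ ≠ 0) (hΓ : -1 < Γ) (δ2 Vmax : K) {M : ℕ} (hM : 1 ≤ M) {V : ℕ → K}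
    (hV : ∀ m : ℕ, 1 ≤ m → m ≤ M → V m = Vmax / (1 + Γ) ^ (M - m)) :
    V 1 = Vmax / (1 + Γ) ^ (M - 1) ∧
    (∀ m : ℕ, 1 ≤ m → m ≤ M →
      (∑ x ∈ Finset.Icc 1 (m - 1), V x = V 1 * ((1 + Γ) ^ (m - 1) - 1) / Γ) ∧
      (V m ≥ Γ * ((∑ x ∈ Finset.Icc 1 (m - 1), V x) + δ2) ↔ V 1 ≥ Γ * δ2) ∧
      (V 1 ≥ Γ * δ2 ↔ Vmax ≥ δ2 * Γ * (1 + Γ) ^ (M - 1))) := by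
  have hr : 0 < 1 + Γ := neg_lt_iff_pos_add'.mp hΓ
  have hV₁ := hV 1 le_rfl hM
  refine ⟨hV₁, fun m hm hmM => ?_⟩
  have hgeom : IsGeometricOn V (1 + Γ) 1 m :=
    (isGeometricOn_of_eq_div_pow_sub hr.ne' hV).mono_right hmM
  have hIcc : Finset.Icc 1 (m - 1) = Finset.Ico 1 m := by
    rw [← Finset.Ico_add_one_right_eq_Icc, Nat.sub_add_cancel hm]
  rw [hIcc]
  refine ⟨hgeom.sum_Ico_eq_div hm hΓ₀, hgeom.mul_sum_Ico_add_le_iff hm δ2, ?_⟩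
  rw [hV₁, ge_iff_le, le_div_iff₀ (pow_pos hr _), mul_comm Γ δ2]

/-- For the top-anchored geometric design V_m = V_max/(1+Γ)^{M-m}: the partial sums have
closed form V_1((1+Γ)^{m-1} − 1)/Γ, and the SIC feasibility condition at each level
2 ≤ m ≤ M holds iff V_1 ≥ Γδ², iff V_max ≥ δ²Γ(1+Γ)^{M-1}. -/
theorem stmt_12 (Γ δ2 Vmax : ℝ) (hΓ : 0 < Γ) (hδ : 0 < δ2) (hVmax : 0 < Vmax)
    (M : ℕ) (hM : 1 ≤ M) (V : ℕ → ℝ)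
    (hV : ∀ m : ℕ, 1 ≤ m → m ≤ M → V m = Vmax / (1 + Γ) ^ (M - m)) :
    V 1 = Vmax / (1 + Γ) ^ (M - 1) ∧
    (∀ m : ℕ, 2 ≤ m → m ≤ M →
      (∑ x ∈ Finset.Icc 1 (m - 1), V x = V 1 * ((1 + Γ) ^ (m - 1) - 1) / Γ) ∧
      (V m ≥ Γ * ((∑ x ∈ Finset.Icc 1 (m - 1), V x) + δ2) ↔ V 1 ≥ Γ * δ2) ∧
      (V 1 ≥ Γ * δ2 ↔ Vmax ≥ δ2 * Γ * (1 + Γ) ^ (M - 1))) := by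
  obtain ⟨hV₁, hlevels⟩ := stmt_12_general hΓ.ne' (by linarith) δ2 Vmax hM hV
  exact ⟨hV₁, fun m hm => hlevels m (one_le_two.trans hm)⟩
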